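/- There is an absolute constant C₀ > 0 with the following property. Let T > 0, let ϱ, δ, β > 0, and let (v, p, η) be a classical solution of the FSI problem on [0,T] with bounded force f and initial displacement η₀. Then for every t ∈ (0,T): (1/2)·‖v(t)‖²_{L²(Ω_η(t))} + ∫₀ᵗ ‖D(v)(s)‖²_{L²(Ω_η(s))} ds + (ϱ/2)·‖∂_tη(t)‖²_{L²(0,1)} + δ·∫₀ᵗ ‖∂_t∂ₓη(s)‖²_{L²(0,1)} ds + (β/2)·‖∂ₓ²η(t)‖²_{L²(0,1)} ≤ (β/2)·‖∂ₓ²η₀‖²_{L²(0,1)} + C₀·(sup|f|)²·vol(Ω_{η₀})·∫₀ᵗ ‖η(s)‖²_{L^∞(0,1)} ds. -/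

import Mathlib

open MeasureTheory Set intervalIntegral

noncomputable section

/-- Partial derivative in the `x` direction of a field on `ℝ×ℝ×ℝ` (variables `(x,z,t)`). -/
def dX (f : ℝ × ℝ × ℝ → ℝ) (q : ℝ × ℝ × ℝ) : ℝ := fderiv ℝ f q (1, 0, 0)

/-- Partial derivative in the `z` direction. -/
def dZ (f : ℝ × ℝ × ℝ → ℝ) (q : ℝ × ℝ × ℝ) : ℝ := fderiv ℝ f q (0, 1, 0)

/-- Partial derivative in the `t` direction. -/
def dT (f : ℝ × ℝ × ℝ → ℝ) (q : ℝ × ℝ × ℝ) : ℝ := fderiv ℝ f q (0, 0, 1)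

/-- Partial derivative in `x` of a field on `ℝ×ℝ` (variables `(x,t)`). -/
def eX (f : ℝ × ℝ → ℝ) (q : ℝ × ℝ) : ℝ := fderiv ℝ f q (1, 0)

/-- Partial derivative in `t` of a field on `ℝ×ℝ` (variables `(x,t)`). -/
def eT (f : ℝ × ℝ → ℝ) (q : ℝ × ℝ) : ℝ := fderiv ℝ f q (0, 1)

/-- A classical solution `(v, p, η)` of the nonlinear FSI problem (1.2)–(1.5) on `[0,T]`
with coefficients `ϱ, δ, β`, force `f = (f1, f2)` and initial displacement `η0`:
all fields are smooth and 1-periodic in `x`; the incompressible Navier–Stokes equations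
(with Cauchy stress `σ(v,p) = 2D(v) − p·I`) hold on the moving subgraph domain
`Ω_η(t) = {0 < z < η(x,t)}`; the visco-elastic plate equation
`ϱ ∂ₜₜη − δ ∂ₓ²∂ₜη + β ∂ₓ⁴η = −(σ(v,p)(−∂ₓη,1)ᵀ)·e_z` (right side evaluated at
`(x, η(x,t), t)`) holds; the kinematic condition `v(x,η(x,t),t) = (0, ∂ₜη)` and the
no-slip condition `v(x,0,t) = 0` hold; and the initial conditions are
`v(·,0) = 0`, `∂ₜη(·,0) = 0`, `η(·,0) = η0 > 0`. -/
structure IsClassicalFSISolution (ϱ δ β T : ℝ)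
    (f1 f2 : ℝ × ℝ × ℝ → ℝ) (v1 v2 pr : ℝ × ℝ × ℝ → ℝ)
    (η : ℝ × ℝ → ℝ) (η0 : ℝ → ℝ) : Prop where
  smooth_v1 : ContDiff ℝ (⊤ : ℕ∞) v1
  smooth_v2 : ContDiff ℝ (⊤ : ℕ∞) v2
  smooth_pr : ContDiff ℝ (⊤ : ℕ∞) pr
  smooth_η : ContDiff ℝ (⊤ : ℕ∞) η
  periodic_v1 : ∀ x z t, v1 (x + 1, z, t) = v1 (x, z, t)
  periodic_v2 : ∀ x z t, v2 (x + 1, z, t) = v2 (x, z, t)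
  periodic_pr : ∀ x z t, pr (x + 1, z, t) = pr (x, z, t)
  periodic_η : ∀ x t, η (x + 1, t) = η (x, t)
  η_pos : ∀ x, ∀ t ∈ Icc (0:ℝ) T, 0 < η (x, t)
  momentum_1 : ∀ x z t, t ∈ Ioo (0:ℝ) T → z ∈ Ioo 0 (η (x, t)) →
    dT v1 (x, z, t) + v1 (x, z, t) * dX v1 (x, z, t) + v2 (x, z, t) * dZ v1 (x, z, t)
      - (dX (fun q => 2 * dX v1 q - pr q) (x, z, t)
          + dZ (fun q => dZ v1 q + dX v2 q) (x, z, t))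
      = f1 (x, z, t)
  momentum_2 : ∀ x z t, t ∈ Ioo (0:ℝ) T → z ∈ Ioo 0 (η (x, t)) →
    dT v2 (x, z, t) + v1 (x, z, t) * dX v2 (x, z, t) + v2 (x, z, t) * dZ v2 (x, z, t)
      - (dX (fun q => dZ v1 q + dX v2 q) (x, z, t)
          + dZ (fun q => 2 * dZ v2 q - pr q) (x, z, t))
      = f2 (x, z, t)
  incompressible : ∀ x z t, t ∈ Ioo (0:ℝ) T → z ∈ Ioo 0 (η (x, t)) →
    dX v1 (x, z, t) + dZ v2 (x, z, t) = 0
  plate : ∀ x : ℝ, ∀ t ∈ Ioo (0:ℝ) T,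
    ϱ * eT (eT η) (x, t) - δ * eX (eX (eT η)) (x, t)
        + β * eX (eX (eX (eX η))) (x, t)
      = -(((dZ v1 (x, η (x, t), t) + dX v2 (x, η (x, t), t)) * (-(eX η (x, t))))
          + (2 * dZ v2 (x, η (x, t), t) - pr (x, η (x, t), t)))
  kinematic_1 : ∀ x : ℝ, ∀ t ∈ Icc (0:ℝ) T, v1 (x, η (x, t), t) = 0
  kinematic_2 : ∀ x : ℝ, ∀ t ∈ Icc (0:ℝ) T, v2 (x, η (x, t), t) = eT η (x, t)
  noslip : ∀ x : ℝ, ∀ t ∈ Icc (0:ℝ) T, v1 (x, 0, t) = 0 ∧ v2 (x, 0, t) = 0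
  init_v : ∀ x z : ℝ, v1 (x, z, 0) = 0 ∧ v2 (x, z, 0) = 0
  init_ηt : ∀ x : ℝ, eT η (x, 0) = 0
  init_η : ∀ x : ℝ, η (x, 0) = η0 x
  init_η_pos : ∀ x : ℝ, 0 < η0 x

/-!
Testing the momentum equation with `v` and the plate equation with `∂ₜη`, the Reynolds transport
theorem and the divergence theorem on the moving domain give the energy balance
`E' = ∫ f · v - 2 ‖D(v)‖² - δ ‖∂ₜ∂ₓη‖²`: at the top boundary the kinematic condition makes the fluid
stress do exactly the work on the plate, and the convective flux cancels the flux of kinetic energy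
due to the motion of the domain.

Since `v₁ = 0` on the whole boundary, `det ∇v` integrates to zero and `‖∇v‖² ≤ 2 ‖D(v)‖²`.
Poincaré's inequality in `z` gives `‖v‖² ≤ ‖η‖_∞² ‖D(v)‖²`, so by Young's inequality
`∫ f · v ≤ ‖η‖_∞² ‖f‖² / 4 + ‖D(v)‖²`, where `‖f‖² ≤ (sup |f|)² vol Ω_η(t)`. Incompressibility keeps
the volume constant, and it remains to integrate in time.
-/

open scoped ContDiff

section Calculus

theorem hasDerivAt_integral_of_continuous {E : Type*} [NormedAddCommGroup E] [NormedSpace ℝ E]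
    {F F' : ℝ → ℝ → E} (hF : ∀ a, Continuous (F a)) (hF' : Continuous F'.uncurry)
    (hderiv : ∀ a z, HasDerivAt (F · z) (F' a z) a) (c d a₀ : ℝ) :
    HasDerivAt (fun a => ∫ z in c..d, F a z) (∫ z in c..d, F' a₀ z) a₀ := by
  obtain ⟨C, hC⟩ := ((isCompact_Icc (a := a₀ - 1) (b := a₀ + 1)).prod
    (isCompact_uIcc (a := c) (b := d))).exists_bound_of_continuousOn hF'.continuousOn
  exact (hasDerivAt_integral_of_dominated_loc_of_deriv_le (s := Icc (a₀ - 1) (a₀ + 1))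
    (bound := fun _ => C) (Icc_mem_nhds (by linarith) (by linarith))
    (.of_forall fun a => (hF a).aestronglyMeasurable) ((hF a₀).intervalIntegrable _ _)
    (by fun_prop : Continuous (F' a₀)).aestronglyMeasurable
    (.of_forall fun z hz a ha => hC (a, z) ⟨ha, uIoc_subset_uIcc hz⟩) intervalIntegrable_const
    (.of_forall fun z _ a _ => hderiv a z)).2

theorem hasDerivAt_integral_of_hasDerivAt_right {E : Type*} [NormedAddCommGroup E]
    [NormedSpace ℝ E] [CompleteSpace E] {F F' : ℝ → ℝ → E} (hF : Continuous F.uncurry)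
    (hF' : Continuous F'.uncurry) (hderiv : ∀ a z, HasDerivAt (F · z) (F' a z) a) {h : ℝ → ℝ}
    {h' a₀ : ℝ} (hh : HasDerivAt h h' a₀) (c : ℝ) :
    HasDerivAt (fun a => ∫ z in c..h a, F a z)
      ((∫ z in c..h a₀, F' a₀ z) + h' • F a₀ (h a₀)) a₀ := by
  have hpartial := hasStrictFDerivAt_uncurry_coprod (u := (a₀, h a₀))
    (f := fun a b => ∫ z in c..b, F a z)
    (f₁ := fun a b => .toSpanSingleton ℝ (∫ z in c..b, F' a z))
    (f₂ := fun a b => .toSpanSingleton ℝ (F a b))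
    (.of_forall fun p => (hasDerivAt_integral_of_continuous (fun a => by fun_prop) hF' hderiv
      c p.2 p.1).hasFDerivAt)
    (.of_forall fun p => ((by fun_prop : Continuous (F p.1)).integral_hasStrictDerivAt
      c p.2).hasDerivAt.hasFDerivAt)
    ((ContinuousLinearMap.toSpanSingletonCLE (𝕜 := ℝ) (E := E)).continuous.comp
      (by fun_prop : Continuous fun p : ℝ × ℝ => ∫ z in c..p.2, F' p.1 z)).continuousAt
    ((ContinuousLinearMap.toSpanSingletonCLE (𝕜 := ℝ) (E := E)).continuous.comp hF).continuousAt
  simpa [Function.HasUncurry.uncurry, Function.comp_def] using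
    hpartial.hasFDerivAt.comp_hasDerivAt a₀ ((hasDerivAt_id a₀).prodMk hh)

theorem sq_integral_le_mul_integral_sq {φ : ℝ → ℝ} {a b : ℝ} (hab : a ≤ b)
    (hφ : IntervalIntegrable φ volume a b)
    (hφ2 : IntervalIntegrable (fun z => φ z ^ 2) volume a b) :
    (∫ z in a..b, φ z) ^ 2 ≤ (b - a) * ∫ z in a..b, φ z ^ 2 := by
  obtain rfl | hlt := hab.eq_or_lt
  · simp
  set m := ∫ z in a..b, φ z
  have hexpand : ∫ z in a..b, ((b - a) * φ z - m) ^ 2 =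
      (b - a) * ((b - a) * (∫ z in a..b, φ z ^ 2) - m ^ 2) := by
    have hpt : ∀ z, ((b - a) * φ z - m) ^ 2 =
        (b - a) ^ 2 * φ z ^ 2 - 2 * (b - a) * m * φ z + m ^ 2 := fun z => by ring
    simp_rw [hpt]
    rw [integral_add ((hφ2.const_mul _).sub (hφ.const_mul _)) intervalIntegrable_const,
      integral_sub (hφ2.const_mul _) (hφ.const_mul _), intervalIntegral.integral_const_mul,
      intervalIntegral.integral_const_mul, intervalIntegral.integral_const, smul_eq_mul]
    ring
  have hnonneg : 0 ≤ ∫ z in a..b, ((b - a) * φ z - m) ^ 2 :=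
    integral_nonneg hab fun _ _ => sq_nonneg _
  rw [hexpand] at hnonneg
  linarith [nonneg_of_mul_nonneg_right hnonneg (sub_pos.2 hlt)]

theorem poincare_of_eq_zero_left {g g' : ℝ → ℝ} {a b : ℝ} (hab : a ≤ b)
    (hg : ∀ z ∈ Icc a b, HasDerivAt g (g' z) z) (hg' : ContinuousOn g' (Icc a b))
    (hga : g a = 0) :
    ∫ z in a..b, g z ^ 2 ≤ (b - a) ^ 2 / 2 * ∫ z in a..b, g' z ^ 2 := by
  have hint {c d : ℝ} (hc : a ≤ c) (hcd : c ≤ d) (hd : d ≤ b) :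
      IntervalIntegrable g' volume c d ∧ IntervalIntegrable (fun z => g' z ^ 2) volume c d := by
    have hcont := hg'.mono (Icc_subset_Icc hc hd)
    exact ⟨hcont.intervalIntegrable_of_Icc hcd, (hcont.pow 2).intervalIntegrable_of_Icc hcd⟩
  have hpt : ∀ z ∈ Icc a b, g z ^ 2 ≤ (z - a) * ∫ y in a..b, g' y ^ 2 := by
    intro z hz
    have hleft := hint le_rfl hz.1 hz.2
    have hright := hint hz.1 hz.2 le_rfl
    have hgz : ∫ y in a..z, g' y = g z := by
      rw [integral_eq_sub_of_hasDerivAt (fun y hy => hg y ?_) hleft.1, hga, sub_zero]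
      rw [uIcc_of_le hz.1] at hy
      exact ⟨hy.1, hy.2.trans hz.2⟩
    calc g z ^ 2 ≤ (z - a) * ∫ y in a..z, g' y ^ 2 :=
          hgz ▸ sq_integral_le_mul_integral_sq hz.1 hleft.1 hleft.2
      _ ≤ (z - a) * ∫ y in a..b, g' y ^ 2 := by
          rw [← integral_add_adjacent_intervals hleft.2 hright.2]
          exact mul_le_mul_of_nonneg_left (le_add_of_nonneg_right <|
            integral_nonneg hz.2 fun _ _ => sq_nonneg _) (sub_nonneg.2 hz.1)
  have hgc : ContinuousOn g (Icc a b) := fun z hz => (hg z hz).continuousAt.continuousWithinAt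
  calc ∫ z in a..b, g z ^ 2 ≤ ∫ z in a..b, (z - a) * ∫ y in a..b, g' y ^ 2 :=
        integral_mono_on hab ((hgc.pow 2).intervalIntegrable_of_Icc hab)
          ((by fun_prop : Continuous fun z => (z - a) * _).intervalIntegrable _ _) hpt
    _ = (b - a) ^ 2 / 2 * ∫ z in a..b, g' z ^ 2 := by
        rw [intervalIntegral.integral_mul_const, integral_comp_sub_right (fun z => z), integral_id]
        ring

theorem fderiv_apply_comm {E F : Type*} [NormedAddCommGroup E] [NormedSpace ℝ E]
    [NormedAddCommGroup F] [NormedSpace ℝ F] {f : E → F} (hf : ContDiff ℝ 2 f) (q u w : E) :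
    fderiv ℝ (fun q => fderiv ℝ f q u) q w = fderiv ℝ (fun q => fderiv ℝ f q w) q u := by
  have hdiff : DifferentiableAt ℝ (fderiv ℝ f) q :=
    (hf.fderiv_right (m := 1) (by norm_num)).differentiable one_ne_zero q
  simpa [fderiv_clm_apply hdiff (differentiableAt_const _)] using
    (hf.contDiffAt.isSymmSndFDerivAt (by simp)).eq w u

theorem contDiff_fderiv_apply {E F : Type*} [NormedAddCommGroup E] [NormedSpace ℝ E]
    [NormedAddCommGroup F] [NormedSpace ℝ F] {f : E → F} (hf : ContDiff ℝ ∞ f) (u : E) :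
    ContDiff ℝ ∞ (fun q => fderiv ℝ f q u) :=
  (hf.fderiv_right (m := ∞) (by simp)).clm_apply contDiff_const

theorem periodic_fderiv_apply {E F : Type*} [NormedAddCommGroup E] [NormedSpace ℝ E]
    [NormedAddCommGroup F] [NormedSpace ℝ F] {f : E → F} {c : E} (hf : Function.Periodic f c)
    (u : E) : Function.Periodic (fun q => fderiv ℝ f q u) c := fun q => by
  change fderiv ℝ f (q + c) u = fderiv ℝ f q u
  rw [← fderiv_comp_add_right, funext hf]

theorem continuous_iSup_of_isCompact {X Y : Type*} [TopologicalSpace X] [TopologicalSpace Y]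
    {K : Set X} (hK : IsCompact K) {f : Y → X → ℝ} (hf : Continuous f.uncurry) :
    Continuous fun y => ⨆ x : K, f y x := by
  simpa only [sSup_image'] using hK.continuous_sSup hf

end Calculus

section CoordinateDerivatives

variable {f : ℝ × ℝ × ℝ → ℝ} {h : ℝ × ℝ → ℝ}

@[fun_prop]
theorem contDiff_dX (hf : ContDiff ℝ ∞ f) : ContDiff ℝ ∞ (dX f) := contDiff_fderiv_apply hf _

@[fun_prop]
theorem contDiff_dZ (hf : ContDiff ℝ ∞ f) : ContDiff ℝ ∞ (dZ f) := contDiff_fderiv_apply hf _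

@[fun_prop]
theorem contDiff_dT (hf : ContDiff ℝ ∞ f) : ContDiff ℝ ∞ (dT f) := contDiff_fderiv_apply hf _

@[fun_prop]
theorem contDiff_eX (hh : ContDiff ℝ ∞ h) : ContDiff ℝ ∞ (eX h) := contDiff_fderiv_apply hh _

@[fun_prop]
theorem contDiff_eT (hh : ContDiff ℝ ∞ h) : ContDiff ℝ ∞ (eT h) := contDiff_fderiv_apply hh _

theorem continuous_dX (hf : ContDiff ℝ 1 f) : Continuous (dX f) := by unfold dX; fun_prop

theorem continuous_dZ (hf : ContDiff ℝ 1 f) : Continuous (dZ f) := by unfold dZ; fun_prop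

theorem continuous_dT (hf : ContDiff ℝ 1 f) : Continuous (dT f) := by unfold dT; fun_prop

theorem hasDerivAt_dX {x z t : ℝ} (hf : DifferentiableAt ℝ f (x, z, t)) :
    HasDerivAt (fun y => f (y, z, t)) (dX f (x, z, t)) x :=
  hf.hasFDerivAt.comp_hasDerivAt x ((hasDerivAt_id x).prodMk (hasDerivAt_const x (z, t)))

theorem hasDerivAt_dZ {x z t : ℝ} (hf : DifferentiableAt ℝ f (x, z, t)) :
    HasDerivAt (fun y => f (x, y, t)) (dZ f (x, z, t)) z :=
  hf.hasFDerivAt.comp_hasDerivAt z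
    ((hasDerivAt_const z x).prodMk ((hasDerivAt_id z).prodMk (hasDerivAt_const z t)))

theorem hasDerivAt_dT {x z t : ℝ} (hf : DifferentiableAt ℝ f (x, z, t)) :
    HasDerivAt (fun s => f (x, z, s)) (dT f (x, z, t)) t :=
  hf.hasFDerivAt.comp_hasDerivAt t
    ((hasDerivAt_const t x).prodMk ((hasDerivAt_const t z).prodMk (hasDerivAt_id t)))

theorem hasDerivAt_eX {x t : ℝ} (hh : DifferentiableAt ℝ h (x, t)) :
    HasDerivAt (fun y => h (y, t)) (eX h (x, t)) x :=
  hh.hasFDerivAt.comp_hasDerivAt x ((hasDerivAt_id x).prodMk (hasDerivAt_const x t))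

theorem hasDerivAt_eT {x t : ℝ} (hh : DifferentiableAt ℝ h (x, t)) :
    HasDerivAt (fun s => h (x, s)) (eT h (x, t)) t :=
  hh.hasFDerivAt.comp_hasDerivAt t ((hasDerivAt_const t x).prodMk (hasDerivAt_id t))

theorem eT_eX (hh : ContDiff ℝ 2 h) : eT (eX h) = eX (eT h) :=
  funext fun q => fderiv_apply_comm hh q _ _

end CoordinateDerivatives

theorem setIntegral_regionBetween {α E : Type*} [MeasurableSpace α] [NormedAddCommGroup E]
    [NormedSpace ℝ E] {μ : Measure α} [SFinite μ] {s : Set α} (hs : MeasurableSet s)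
    {f h : α → ℝ} (hf : Measurable f) (hh : Measurable h) {g : α × ℝ → E}
    (hg : IntegrableOn g (regionBetween f h s) (μ.prod volume)) :
    ∫ p in regionBetween f h s, g p ∂(μ.prod volume) =
      ∫ x in s, (∫ z in Ioo (f x) (h x), g (x, z)) ∂μ := by
  have hmeas := measurableSet_regionBetween hf hh hs
  rw [← MeasureTheory.integral_indicator hmeas, integral_prod _ (hg.integrable_indicator hmeas),
    ← MeasureTheory.integral_indicator hs]
  refine integral_congr_ae (.of_forall fun x => ?_)
  by_cases hx : x ∈ s
  · simp [indicator, regionBetween, hx, ← MeasureTheory.integral_indicator measurableSet_Ioo]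
  · simp [regionBetween, hx]

section SubgraphIntegral

/-- The integral of `g` over the time slice `{(x, z) | 0 < x < 1, 0 < z < η (x, t)}` of the moving
domain below the graph of `η`, encoded as an iterated integral; see `setIntegral_subgraph`. -/
def subgraphIntegral (η : ℝ × ℝ → ℝ) (g : ℝ × ℝ × ℝ → ℝ) (t : ℝ) : ℝ :=
  ∫ x in (0 : ℝ)..1, ∫ z in (0 : ℝ)..η (x, t), g (x, z, t)

variable {η : ℝ × ℝ → ℝ} {f g : ℝ × ℝ × ℝ → ℝ} {t : ℝ}

theorem setIntegral_subgraph (hη : Continuous η) (hpos : ∀ x, 0 ≤ η (x, t)) (hg : Continuous g) :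
    ∫ p in {p : ℝ × ℝ | p.1 ∈ Ioo (0 : ℝ) 1 ∧ p.2 ∈ Ioo 0 (η (p.1, t))}, g (p.1, p.2, t) =
      subgraphIntegral η g t := by
  have hηt : Continuous fun x => η (x, t) := by fun_prop
  obtain ⟨M, hM⟩ := isCompact_Icc.exists_bound_of_continuousOn (s := Icc (0 : ℝ) 1) hηt.continuousOn
  have hsub : regionBetween (fun _ => 0) (fun x => η (x, t)) (Ioo (0 : ℝ) 1) ⊆ Icc 0 1 ×ˢ Icc 0 M :=
    fun p hp => ⟨Ioo_subset_Icc_self hp.1, hp.2.1.le,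
      hp.2.2.le.trans ((le_abs_self _).trans (hM p.1 (Ioo_subset_Icc_self hp.1)))⟩
  have hint : IntegrableOn (fun p : ℝ × ℝ => g (p.1, p.2, t)) (Icc 0 1 ×ˢ Icc 0 M) :=
    (by fun_prop : Continuous _).continuousOn.integrableOn_compact
      (isCompact_Icc.prod isCompact_Icc)
  refine (setIntegral_regionBetween measurableSet_Ioo measurable_const hηt.measurable
    (hint.mono_set hsub)).trans ?_
  simp only [subgraphIntegral, integral_of_le, zero_le_one, hpos, integral_Ioc_eq_integral_Ioo]

theorem continuous_subgraphIntegral (hη : Continuous η) (hg : Continuous g) :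
    Continuous (subgraphIntegral η g) := by
  unfold subgraphIntegral; fun_prop

theorem subgraphIntegral_add (hη : Continuous η) (hf : Continuous f) (hg : Continuous g) :
    subgraphIntegral η (fun q => f q + g q) t =
      subgraphIntegral η f t + subgraphIntegral η g t := by
  simp only [subgraphIntegral]
  rw [← intervalIntegral.integral_add (Continuous.intervalIntegrable (by fun_prop) _ _)
    (Continuous.intervalIntegrable (by fun_prop) _ _)]
  exact integral_congr fun x _ => intervalIntegral.integral_add
    (Continuous.intervalIntegrable (by fun_prop) _ _)
    (Continuous.intervalIntegrable (by fun_prop) _ _)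

theorem subgraphIntegral_const_mul (c : ℝ) :
    subgraphIntegral η (fun q => c * g q) t = c * subgraphIntegral η g t := by
  simp only [subgraphIntegral, intervalIntegral.integral_const_mul]

theorem subgraphIntegral_mono (hη : Continuous η) (hpos : ∀ x, 0 ≤ η (x, t)) (hf : Continuous f)
    (hg : Continuous g) (hfg : ∀ x, ∀ z ∈ Ioo 0 (η (x, t)), f (x, z, t) ≤ g (x, z, t)) :
    subgraphIntegral η f t ≤ subgraphIntegral η g t :=
  integral_mono_on zero_le_one (Continuous.intervalIntegrable (by fun_prop) _ _)
    (Continuous.intervalIntegrable (by fun_prop) _ _) fun x _ =>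
    integral_mono_on_of_le_Ioo (hpos x) (Continuous.intervalIntegrable (by fun_prop) _ _)
      (Continuous.intervalIntegrable (by fun_prop) _ _) (hfg x)

theorem subgraphIntegral_congr (hpos : ∀ x, 0 ≤ η (x, t))
    (hfg : ∀ x, ∀ z ∈ Ioo 0 (η (x, t)), f (x, z, t) = g (x, z, t)) :
    subgraphIntegral η f t = subgraphIntegral η g t := by
  simp only [subgraphIntegral, integral_of_le (hpos _), integral_Ioc_eq_integral_Ioo]
  exact integral_congr fun x _ => setIntegral_congr_fun measurableSet_Ioo (hfg x)

theorem hasDerivAt_subgraphIntegral (hη : ContDiff ℝ 1 η) (hg : ContDiff ℝ 1 g) (t : ℝ) :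
    HasDerivAt (subgraphIntegral η g)
      (subgraphIntegral η (dT g) t + ∫ x in (0 : ℝ)..1, eT η (x, t) * g (x, η (x, t), t)) t := by
  have hdg := continuous_dT hg
  have hdη : Continuous (eT η) := by unfold eT; fun_prop
  simp only [subgraphIntegral]
  rw [← intervalIntegral.integral_add (Continuous.intervalIntegrable (by fun_prop) _ _)
    (Continuous.intervalIntegrable (by fun_prop) _ _)]
  exact hasDerivAt_integral_of_continuous
    (F := fun s x => ∫ z in (0 : ℝ)..η (x, s), g (x, z, s))
    (F' := fun s x => (∫ z in (0 : ℝ)..η (x, s), dT g (x, z, s)) + eT η (x, s) * g (x, η (x, s), s))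
    (fun s => by fun_prop) (by simp only [Function.uncurry_def]; fun_prop)
    (fun s x => hasDerivAt_integral_of_hasDerivAt_right (F := fun s z => g (x, z, s))
      (F' := fun s z => dT g (x, z, s)) (by simp only [Function.uncurry_def]; fun_prop)
      (by simp only [Function.uncurry_def]; fun_prop)
      (fun s z => hasDerivAt_dT (hg.differentiable one_ne_zero _))
      (hasDerivAt_eT (hη.differentiable one_ne_zero _)) 0) 0 1 t

theorem subgraphIntegral_dZ (hg : ContDiff ℝ 1 g) (t : ℝ) :
    subgraphIntegral η (dZ g) t = ∫ x in (0 : ℝ)..1, (g (x, η (x, t), t) - g (x, 0, t)) := by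
  have hdg := continuous_dZ hg
  exact integral_congr fun x _ => integral_eq_sub_of_hasDerivAt
    (fun z _ => hasDerivAt_dZ (hg.differentiable one_ne_zero _))
    (Continuous.intervalIntegrable (by fun_prop) _ _)

theorem subgraphIntegral_dX (hη : ContDiff ℝ 1 η) (hg : ContDiff ℝ 1 g)
    (hηper : Function.Periodic η (1, 0)) (hgper : Function.Periodic g (1, 0, 0)) (t : ℝ) :
    subgraphIntegral η (dX g) t = -∫ x in (0 : ℝ)..1, eX η (x, t) * g (x, η (x, t), t) := by
  have hdg := continuous_dX hg
  have hdη : Continuous (eX η) := by unfold eX; fun_prop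
  have hderiv : ∀ x, HasDerivAt (fun x => ∫ z in (0 : ℝ)..η (x, t), g (x, z, t))
      ((∫ z in (0 : ℝ)..η (x, t), dX g (x, z, t)) + eX η (x, t) * g (x, η (x, t), t)) x := fun x =>
    hasDerivAt_integral_of_hasDerivAt_right (F := fun x z => g (x, z, t))
      (F' := fun x z => dX g (x, z, t)) (by simp only [Function.uncurry_def]; fun_prop)
      (by simp only [Function.uncurry_def]; fun_prop)
      (fun x z => hasDerivAt_dX (hg.differentiable one_ne_zero _))
      (hasDerivAt_eX (hη.differentiable one_ne_zero _)) 0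
  have hηend : η (1, t) = η (0, t) := by simpa using hηper (0, t)
  have hgend : ∀ z, g (1, z, t) = g (0, z, t) := fun z => by simpa using hgper (0, z, t)
  have hFTC := integral_eq_sub_of_hasDerivAt (a := 0) (b := 1) (fun x _ => hderiv x)
    (Continuous.intervalIntegrable (by fun_prop) _ _)
  rw [intervalIntegral.integral_add (Continuous.intervalIntegrable (by fun_prop) _ _)
    (Continuous.intervalIntegrable (by fun_prop) _ _)] at hFTC
  simp only [hηend, hgend, sub_self] at hFTC
  exact eq_neg_of_add_eq_zero_left hFTC

end SubgraphIntegral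

theorem subgraphIntegral_divergence {η : ℝ × ℝ → ℝ} {P Q : ℝ × ℝ × ℝ → ℝ} (hη : ContDiff ℝ 1 η)
    (hP : ContDiff ℝ 1 P) (hQ : ContDiff ℝ 1 Q) (hηper : Function.Periodic η (1, 0))
    (hPper : Function.Periodic P (1, 0, 0)) (t : ℝ) :
    subgraphIntegral η (fun q => dX P q + dZ Q q) t = ∫ x in (0 : ℝ)..1,
      (Q (x, η (x, t), t) - eX η (x, t) * P (x, η (x, t), t) - Q (x, 0, t)) := by
  have hdη : Continuous (eX η) := by unfold eX; fun_prop
  rw [subgraphIntegral_add hη.continuous (continuous_dX hP) (continuous_dZ hQ),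
    subgraphIntegral_dX hη hP hηper hPper, subgraphIntegral_dZ hQ, neg_add_eq_sub,
    ← intervalIntegral.integral_sub (Continuous.intervalIntegrable (by fun_prop) _ _)
      (Continuous.intervalIntegrable (by fun_prop) _ _)]
  exact integral_congr fun x _ => by ring

theorem subgraphIntegral_sq_le {η : ℝ × ℝ → ℝ} {g : ℝ × ℝ × ℝ → ℝ} {t A : ℝ} (hη : Continuous η)
    (hpos : ∀ x, 0 ≤ η (x, t)) (hA : ∀ x ∈ Icc (0 : ℝ) 1, η (x, t) ^ 2 ≤ A) (hg : ContDiff ℝ 1 g)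
    (hbot : ∀ x, g (x, 0, t) = 0) :
    subgraphIntegral η (fun q => g q ^ 2) t ≤
      A / 2 * subgraphIntegral η (fun q => dZ g q ^ 2) t := by
  have hdg := continuous_dZ hg
  rw [← subgraphIntegral_const_mul]
  refine integral_mono_on zero_le_one (Continuous.intervalIntegrable (by fun_prop) _ _)
    (Continuous.intervalIntegrable (by fun_prop) _ _) fun x hx => ?_
  have hpoincare := poincare_of_eq_zero_left (hpos x)
    (fun z _ => hasDerivAt_dZ (hg.differentiable one_ne_zero (x, z, t)))
    (by fun_prop : Continuous fun z => dZ g (x, z, t)).continuousOn (hbot x)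
  rw [intervalIntegral.integral_const_mul]
  refine hpoincare.trans (mul_le_mul_of_nonneg_right ?_
    (integral_nonneg (hpos x) fun _ _ => sq_nonneg _))
  linarith [hA x hx, sub_zero (η (x, t))]

section FluidEnergy

/-- The kinetic energy density `|v|² / 2`. -/
def kineticDensity (v1 v2 : ℝ × ℝ × ℝ → ℝ) (q : ℝ × ℝ × ℝ) : ℝ :=
  1 / 2 * (v1 q ^ 2 + v2 q ^ 2)

/-- The squared Frobenius norm `|∇v|²` of the spatial velocity gradient. -/
def gradSq (v1 v2 : ℝ × ℝ × ℝ → ℝ) (q : ℝ × ℝ × ℝ) : ℝ :=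
  dX v1 q ^ 2 + dZ v1 q ^ 2 + dX v2 q ^ 2 + dZ v2 q ^ 2

/-- The squared Frobenius norm `|D(v)|²` of the symmetric gradient. -/
def strainSq (v1 v2 : ℝ × ℝ × ℝ → ℝ) (q : ℝ × ℝ × ℝ) : ℝ :=
  dX v1 q ^ 2 + dZ v2 q ^ 2 + 2 * ((dZ v1 q + dX v2 q) / 2) ^ 2

/-- The `(x, x)` entry of the Cauchy stress `σ(v, p) = 2 D(v) - p I`. -/
def stressXX (v1 p : ℝ × ℝ × ℝ → ℝ) (q : ℝ × ℝ × ℝ) : ℝ := 2 * dX v1 q - p q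

/-- The off-diagonal entry of the Cauchy stress `σ(v, p) = 2 D(v) - p I`. -/
def stressXZ (v1 v2 : ℝ × ℝ × ℝ → ℝ) (q : ℝ × ℝ × ℝ) : ℝ := dZ v1 q + dX v2 q

/-- The `(z, z)` entry of the Cauchy stress `σ(v, p) = 2 D(v) - p I`. -/
def stressZZ (v2 p : ℝ × ℝ × ℝ → ℝ) (q : ℝ × ℝ × ℝ) : ℝ := 2 * dZ v2 q - p q

/-- The `x` component of `∂ₜv + (v · ∇)v - div σ(v, p)`. It replaces the force, to which it is equal
only inside the fluid domain, because it is continuous everywhere. -/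
def momentumX (v1 v2 p : ℝ × ℝ × ℝ → ℝ) (q : ℝ × ℝ × ℝ) : ℝ :=
  dT v1 q + v1 q * dX v1 q + v2 q * dZ v1 q - (dX (stressXX v1 p) q + dZ (stressXZ v1 v2) q)

/-- The `z` component of `∂ₜv + (v · ∇)v - div σ(v, p)`; see `momentumX`. -/
def momentumZ (v1 v2 p : ℝ × ℝ × ℝ → ℝ) (q : ℝ × ℝ × ℝ) : ℝ :=
  dT v2 q + v1 q * dX v2 q + v2 q * dZ v2 q - (dX (stressXZ v1 v2) q + dZ (stressZZ v2 p) q)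

/-- One component of the energy flux `σ v - (|v|² / 2) v`: here `(σ₁, σ₂)` is a row of the stress
and `c` the velocity component in the direction of the flux. -/
def energyFlux (v1 v2 σ₁ σ₂ c : ℝ × ℝ × ℝ → ℝ) (q : ℝ × ℝ × ℝ) : ℝ :=
  σ₁ q * v1 q + σ₂ q * v2 q - c q * kineticDensity v1 v2 q

variable {v1 v2 p σ₁ σ₂ c : ℝ × ℝ × ℝ → ℝ}

@[fun_prop]
theorem contDiff_kineticDensity {n : ℕ∞ω} (h1 : ContDiff ℝ n v1) (h2 : ContDiff ℝ n v2) :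
    ContDiff ℝ n (kineticDensity v1 v2) := by
  unfold kineticDensity; fun_prop

@[fun_prop]
theorem continuous_strainSq (h1 : ContDiff ℝ 1 v1) (h2 : ContDiff ℝ 1 v2) :
    Continuous (strainSq v1 v2) := by
  unfold strainSq dX dZ; fun_prop

theorem fderiv_kineticDensity {q : ℝ × ℝ × ℝ} (h1 : DifferentiableAt ℝ v1 q)
    (h2 : DifferentiableAt ℝ v2 q) (u : ℝ × ℝ × ℝ) :
    fderiv ℝ (kineticDensity v1 v2) q u = v1 q * fderiv ℝ v1 q u + v2 q * fderiv ℝ v2 q u := by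
  unfold kineticDensity
  rw [fderiv_const_mul (by fun_prop), fderiv_fun_add (by fun_prop) (by fun_prop),
    fderiv_fun_pow 2 h1, fderiv_fun_pow 2 h2]
  simp only [smul_apply, add_apply, nsmul_eq_mul, smul_eq_mul]
  ring

theorem fderiv_energyFlux {q : ℝ × ℝ × ℝ} (h1 : DifferentiableAt ℝ v1 q)
    (h2 : DifferentiableAt ℝ v2 q) (hσ₁ : DifferentiableAt ℝ σ₁ q) (hσ₂ : DifferentiableAt ℝ σ₂ q)
    (hc : DifferentiableAt ℝ c q) (u : ℝ × ℝ × ℝ) :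
    fderiv ℝ (energyFlux v1 v2 σ₁ σ₂ c) q u =
      fderiv ℝ σ₁ q u * v1 q + σ₁ q * fderiv ℝ v1 q u
        + (fderiv ℝ σ₂ q u * v2 q + σ₂ q * fderiv ℝ v2 q u)
        - (fderiv ℝ c q u * kineticDensity v1 v2 q
          + c q * (v1 q * fderiv ℝ v1 q u + v2 q * fderiv ℝ v2 q u)) := by
  have hk : DifferentiableAt ℝ (kineticDensity v1 v2) q := by unfold kineticDensity; fun_prop
  unfold energyFlux
  rw [fderiv_fun_sub (by fun_prop) (by fun_prop), fderiv_fun_add (by fun_prop) (by fun_prop),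
    fderiv_fun_mul hσ₁ h1, fderiv_fun_mul hσ₂ h2, fderiv_fun_mul hc hk]
  simp only [smul_apply, add_apply, sub_apply, smul_eq_mul, fderiv_kineticDensity h1 h2]
  ring

@[fun_prop]
theorem contDiff_stressXX (h1 : ContDiff ℝ ∞ v1) (hp : ContDiff ℝ ∞ p) :
    ContDiff ℝ ∞ (stressXX v1 p) := by
  unfold stressXX; fun_prop

@[fun_prop]
theorem contDiff_stressXZ (h1 : ContDiff ℝ ∞ v1) (h2 : ContDiff ℝ ∞ v2) :
    ContDiff ℝ ∞ (stressXZ v1 v2) := by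
  unfold stressXZ; fun_prop

@[fun_prop]
theorem contDiff_stressZZ (h2 : ContDiff ℝ ∞ v2) (hp : ContDiff ℝ ∞ p) :
    ContDiff ℝ ∞ (stressZZ v2 p) := by
  unfold stressZZ; fun_prop

@[fun_prop]
theorem continuous_momentumX (h1 : ContDiff ℝ ∞ v1) (h2 : ContDiff ℝ ∞ v2)
    (hp : ContDiff ℝ ∞ p) : Continuous (momentumX v1 v2 p) := by
  unfold momentumX; fun_prop

@[fun_prop]
theorem continuous_momentumZ (h1 : ContDiff ℝ ∞ v1) (h2 : ContDiff ℝ ∞ v2)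
    (hp : ContDiff ℝ ∞ p) : Continuous (momentumZ v1 v2 p) := by
  unfold momentumZ; fun_prop

@[fun_prop]
theorem contDiff_energyFlux {n : ℕ∞ω} (h1 : ContDiff ℝ n v1) (h2 : ContDiff ℝ n v2)
    (hσ₁ : ContDiff ℝ n σ₁) (hσ₂ : ContDiff ℝ n σ₂) (hc : ContDiff ℝ n c) :
    ContDiff ℝ n (energyFlux v1 v2 σ₁ σ₂ c) := by
  unfold energyFlux; fun_prop

theorem dT_kineticDensity_add_strainSq (h1 : ContDiff ℝ ∞ v1) (h2 : ContDiff ℝ ∞ v2)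
    (hp : ContDiff ℝ ∞ p) (q : ℝ × ℝ × ℝ) :
    dT (kineticDensity v1 v2) q + 2 * strainSq v1 v2 q =
      dX (energyFlux v1 v2 (stressXX v1 p) (stressXZ v1 v2) v1) q
        + dZ (energyFlux v1 v2 (stressXZ v1 v2) (stressZZ v2 p) v2) q
        + (momentumX v1 v2 p q * v1 q + momentumZ v1 v2 p q * v2 q)
        + (kineticDensity v1 v2 q + p q) * (dX v1 q + dZ v2 q) := by
  have hdiff {f : ℝ × ℝ × ℝ → ℝ} (hf : ContDiff ℝ ∞ f) : DifferentiableAt ℝ f q :=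
    hf.differentiable (by simp) q
  have hXX := hdiff (contDiff_stressXX h1 hp)
  have hXZ := hdiff (contDiff_stressXZ h1 h2)
  have hZZ := hdiff (contDiff_stressZZ h2 hp)
  simp only [strainSq, momentumX, momentumZ, dT, dX, dZ,
    fderiv_kineticDensity (hdiff h1) (hdiff h2),
    fderiv_energyFlux (hdiff h1) (hdiff h2) hXX hXZ (hdiff h1),
    fderiv_energyFlux (hdiff h1) (hdiff h2) hXZ hZZ (hdiff h2), stressXX, stressXZ, stressZZ]
  ring

theorem strainSq_eq_gradSq_sub_divergence (h1 : ContDiff ℝ 1 v1) (h2 : ContDiff ℝ 2 v2)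
    (q : ℝ × ℝ × ℝ) :
    strainSq v1 v2 q = 1 / 2 * (gradSq v1 v2 q + (dX v1 q + dZ v2 q) ^ 2)
      - (dX (fun q => v1 q * dZ v2 q) q + dZ (fun q => -(v1 q * dX v2 q)) q) := by
  have hderiv (u w : ℝ × ℝ × ℝ) : fderiv ℝ (fun q => v1 q * fderiv ℝ v2 q u) q w =
      v1 q * fderiv ℝ (fun q => fderiv ℝ v2 q u) q w + fderiv ℝ v1 q w * fderiv ℝ v2 q u := by
    have hd := (h2.fderiv_right (m := 1) (by norm_num)).clm_apply (contDiff_const (c := u))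
    rw [fderiv_fun_mul (h1.differentiable one_ne_zero q) (hd.differentiable one_ne_zero q)]
    simp only [smul_apply, add_apply, smul_eq_mul]
    ring
  simp only [strainSq, gradSq, dX, dZ, fderiv_fun_neg, neg_apply, hderiv,
    fderiv_apply_comm h2 q (0, 1, 0) (1, 0, 0)]
  ring

theorem continuous_gradSq (h1 : ContDiff ℝ 1 v1) (h2 : ContDiff ℝ 1 v2) :
    Continuous (gradSq v1 v2) := by
  unfold gradSq dX dZ; fun_prop

end FluidEnergy

section FluidEstimates

variable {v1 v2 : ℝ × ℝ × ℝ → ℝ} {η : ℝ × ℝ → ℝ} {t A : ℝ}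

theorem subgraphIntegral_gradSq_le (h1 : ContDiff ℝ 1 v1) (h2 : ContDiff ℝ 2 v2)
    (hη : ContDiff ℝ 1 η) (hv1per : Function.Periodic v1 (1, 0, 0))
    (hv2per : Function.Periodic v2 (1, 0, 0)) (hηper : Function.Periodic η (1, 0))
    (hpos : ∀ x, 0 ≤ η (x, t)) (hbot : ∀ x, v1 (x, 0, t) = 0)
    (htop : ∀ x, v1 (x, η (x, t), t) = 0) :
    subgraphIntegral η (gradSq v1 v2) t ≤ 2 * subgraphIntegral η (strainSq v1 v2) t := by
  set P := fun q => v1 q * dZ v2 q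
  set Q := fun q => -(v1 q * dX v2 q)
  have hP : ContDiff ℝ 1 P := h1.mul ((h2.fderiv_right (by norm_num)).clm_apply contDiff_const)
  have hQ : ContDiff ℝ 1 Q :=
    (h1.mul ((h2.fderiv_right (by norm_num)).clm_apply contDiff_const)).neg
  have h2' := h2.of_le one_le_two
  have hdiv : subgraphIntegral η (fun q => dX P q + dZ Q q) t = 0 := by
    rw [subgraphIntegral_divergence hη hP hQ hηper (hv1per.mul (periodic_fderiv_apply hv2per _))]
    simp [P, Q, hbot, htop]
  have hPQ : Continuous fun q => dX P q + dZ Q q := (continuous_dX hP).add (continuous_dZ hQ)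
  calc subgraphIntegral η (gradSq v1 v2) t
      ≤ subgraphIntegral η (fun q => 2 * (strainSq v1 v2 q + (dX P q + dZ Q q))) t :=
        subgraphIntegral_mono hη.continuous hpos (continuous_gradSq h1 h2')
          (((continuous_strainSq h1 h2').add hPQ).const_mul 2) fun x z _ => by
            rw [strainSq_eq_gradSq_sub_divergence h1 h2]
            linarith [sq_nonneg (dX v1 (x, z, t) + dZ v2 (x, z, t))]
    _ = 2 * subgraphIntegral η (strainSq v1 v2) t := by
        rw [subgraphIntegral_const_mul,
          subgraphIntegral_add hη.continuous (continuous_strainSq h1 h2') hPQ, hdiv, add_zero]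

theorem subgraphIntegral_kineticDensity_le (h1 : ContDiff ℝ 1 v1) (h2 : ContDiff ℝ 1 v2)
    (hη : Continuous η) (hpos : ∀ x, 0 ≤ η (x, t)) (hA : ∀ x ∈ Icc (0 : ℝ) 1, η (x, t) ^ 2 ≤ A)
    (hbot : ∀ x, v1 (x, 0, t) = 0 ∧ v2 (x, 0, t) = 0) :
    subgraphIntegral η (kineticDensity v1 v2) t ≤
      A / 4 * subgraphIntegral η (gradSq v1 v2) t := by
  have hd1 := continuous_dZ h1
  have hd2 := continuous_dZ h2
  have hA0 : 0 ≤ A := (sq_nonneg _).trans (hA 0 (by simp))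
  have hgrad : subgraphIntegral η (fun q => dZ v1 q ^ 2 + dZ v2 q ^ 2) t ≤
      subgraphIntegral η (gradSq v1 v2) t :=
    subgraphIntegral_mono hη hpos (by fun_prop) (continuous_gradSq h1 h2) fun x z _ => by
      simp only [gradSq]
      linarith [sq_nonneg (dX v1 (x, z, t)), sq_nonneg (dX v2 (x, z, t))]
  rw [subgraphIntegral_add hη (by fun_prop) (by fun_prop)] at hgrad
  have hP1 := subgraphIntegral_sq_le hη hpos hA h1 fun x => (hbot x).1
  have hP2 := subgraphIntegral_sq_le hη hpos hA h2 fun x => (hbot x).2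
  calc subgraphIntegral η (kineticDensity v1 v2) t
      = 1 / 2 * (subgraphIntegral η (fun q => v1 q ^ 2) t
          + subgraphIntegral η (fun q => v2 q ^ 2) t) := by
        rw [← subgraphIntegral_add hη (by fun_prop) (by fun_prop), ← subgraphIntegral_const_mul]
        rfl
    _ ≤ A / 4 * (subgraphIntegral η (fun q => dZ v1 q ^ 2) t
          + subgraphIntegral η (fun q => dZ v2 q ^ 2) t) := by linarith
    _ ≤ A / 4 * subgraphIntegral η (gradSq v1 v2) t := by gcongr

theorem subgraphIntegral_dot_le {R1 R2 : ℝ × ℝ × ℝ → ℝ} {K : ℝ} (hR1 : Continuous R1)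
    (hR2 : Continuous R2) (h1 : Continuous v1) (h2 : Continuous v2) (hη : Continuous η)
    (hpos : ∀ x, 0 ≤ η (x, t)) (hA : 0 < A)
    (hR : ∀ x, ∀ z ∈ Ioo 0 (η (x, t)), R1 (x, z, t) ^ 2 + R2 (x, z, t) ^ 2 ≤ K ^ 2) :
    subgraphIntegral η (fun q => R1 q * v1 q + R2 q * v2 q) t ≤
      A / 4 * K ^ 2 * (∫ x in (0 : ℝ)..1, η (x, t))
        + 2 / A * subgraphIntegral η (kineticDensity v1 v2) t := by
  have hyoung (a b : ℝ) : a * b ≤ A / 4 * a ^ 2 + 1 / A * b ^ 2 := by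
    have hsq : A / 4 * a ^ 2 + 1 / A * b ^ 2 - a * b = (A * a - 2 * b) ^ 2 / (4 * A) := by
      field_simp; ring
    linarith [div_nonneg (sq_nonneg (A * a - 2 * b)) (by positivity : 0 ≤ 4 * A)]
  have hk : Continuous (kineticDensity v1 v2) := by unfold kineticDensity; fun_prop
  have hconst : subgraphIntegral η (fun _ => A / 4 * K ^ 2) t =
      A / 4 * K ^ 2 * ∫ x in (0 : ℝ)..1, η (x, t) := by
    simp only [subgraphIntegral, intervalIntegral.integral_const, smul_eq_mul, sub_zero,
      intervalIntegral.integral_mul_const]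
    ring
  rw [← hconst, ← subgraphIntegral_const_mul,
    ← subgraphIntegral_add hη continuous_const (by fun_prop)]
  refine subgraphIntegral_mono hη hpos (by fun_prop) (by fun_prop) fun x z hz => ?_
  have hK := mul_le_mul_of_nonneg_left (hR x z hz) (by positivity : 0 ≤ A / 4)
  have hsplit : 2 / A * kineticDensity v1 v2 (x, z, t) =
      1 / A * v1 (x, z, t) ^ 2 + 1 / A * v2 (x, z, t) ^ 2 := by
    simp only [kineticDensity]; ring
  rw [hsplit]
  linarith [hyoung (R1 (x, z, t)) (v1 (x, z, t)), hyoung (R2 (x, z, t)) (v2 (x, z, t))]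

end FluidEstimates

section Plate

/-- The operator `ϱ ∂ₜₜ - δ ∂ₓ²∂ₜ + β ∂ₓ⁴` of the visco-elastic plate equation. -/
def plateOperator (ϱ δ β : ℝ) (η : ℝ × ℝ → ℝ) (q : ℝ × ℝ) : ℝ :=
  ϱ * eT (eT η) q - δ * eX (eX (eT η)) q + β * eX (eX (eX (eX η))) q

/-- The kinetic plus bending energy `(ϱ/2) ‖∂ₜη‖² + (β/2) ‖∂ₓ²η‖²` of the plate at time `t`. -/
def plateEnergy (ϱ β : ℝ) (η : ℝ × ℝ → ℝ) (t : ℝ) : ℝ :=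
  ϱ / 2 * (∫ x in (0 : ℝ)..1, eT η (x, t) ^ 2) + β / 2 * ∫ x in (0 : ℝ)..1, eX (eX η) (x, t) ^ 2

variable {f g η : ℝ × ℝ → ℝ}

theorem integral_mul_eX (hf : ContDiff ℝ 1 f) (hg : ContDiff ℝ 1 g)
    (hfper : Function.Periodic f (1, 0)) (hgper : Function.Periodic g (1, 0)) (t : ℝ) :
    ∫ x in (0 : ℝ)..1, f (x, t) * eX g (x, t) = -∫ x in (0 : ℝ)..1, eX f (x, t) * g (x, t) := by
  have hdf : Continuous (eX f) := by unfold eX; fun_prop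
  have hdg : Continuous (eX g) := by unfold eX; fun_prop
  have hfend : f (1, t) = f (0, t) := by simpa using hfper (0, t)
  have hgend : g (1, t) = g (0, t) := by simpa using hgper (0, t)
  rw [integral_mul_deriv_eq_deriv_mul (u := fun x => f (x, t)) (v := fun x => g (x, t))
    (fun x _ => hasDerivAt_eX (hf.differentiable one_ne_zero _))
    (fun x _ => hasDerivAt_eX (hg.differentiable one_ne_zero _))
    (Continuous.intervalIntegrable (by fun_prop) _ _)
    (Continuous.intervalIntegrable (by fun_prop) _ _), hfend, hgend, sub_self, zero_sub]

theorem hasDerivAt_integral_sq (hg : ContDiff ℝ 1 g) (t : ℝ) :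
    HasDerivAt (fun s => ∫ x in (0 : ℝ)..1, g (x, s) ^ 2)
      (2 * ∫ x in (0 : ℝ)..1, g (x, t) * eT g (x, t)) t := by
  have hdg : Continuous (eT g) := by unfold eT; fun_prop
  rw [← intervalIntegral.integral_const_mul]
  refine hasDerivAt_integral_of_continuous (F := fun s x => g (x, s) ^ 2)
    (F' := fun s x => 2 * (g (x, s) * eT g (x, s))) (fun s => by fun_prop)
    (by simp only [Function.uncurry_def]; fun_prop) (fun s x => ?_) 0 1 t
  simpa [mul_assoc] using (hasDerivAt_eT (hg.differentiable one_ne_zero (x, s))).fun_pow 2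

theorem integral_eT_mul_plateOperator (ϱ δ β : ℝ) (hη : ContDiff ℝ ∞ η)
    (hper : Function.Periodic η (1, 0)) (t : ℝ) :
    ∫ x in (0 : ℝ)..1, eT η (x, t) * plateOperator ϱ δ β η (x, t) =
      ϱ * (∫ x in (0 : ℝ)..1, eT η (x, t) * eT (eT η) (x, t))
        + δ * (∫ x in (0 : ℝ)..1, eX (eT η) (x, t) ^ 2)
        + β * ∫ x in (0 : ℝ)..1, eX (eX η) (x, t) * eX (eX (eT η)) (x, t) := by
  have hC1 {h : ℝ × ℝ → ℝ} (hh : ContDiff ℝ ∞ h) : ContDiff ℝ 1 h := hh.of_le ENat.LEInfty.out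
  have hT : Function.Periodic (eT η) (1, 0) := periodic_fderiv_apply hper _
  have hX {h : ℝ × ℝ → ℝ} (hh : Function.Periodic h (1, 0)) : Function.Periodic (eX h) (1, 0) :=
    periodic_fderiv_apply hh _
  have hdamping : ∫ x in (0 : ℝ)..1, eT η (x, t) * eX (eX (eT η)) (x, t) =
      -∫ x in (0 : ℝ)..1, eX (eT η) (x, t) ^ 2 := by
    simp only [sq]
    exact integral_mul_eX (hC1 (by fun_prop)) (hC1 (by fun_prop)) hT (hX hT) t
  have hbending : ∫ x in (0 : ℝ)..1, eX (eX η) (x, t) * eX (eX (eT η)) (x, t) =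
      ∫ x in (0 : ℝ)..1, eT η (x, t) * eX (eX (eX (eX η))) (x, t) := by
    rw [integral_mul_eX (hC1 (by fun_prop)) (hC1 (by fun_prop)) (hX (hX hper)) (hX hT),
      integral_mul_eX (hC1 (by fun_prop)) (hC1 (by fun_prop)) (hX (hX (hX hper))) hT, neg_neg]
    simp only [mul_comm]
  have hexpand (x : ℝ) : eT η (x, t) * plateOperator ϱ δ β η (x, t) =
      ϱ * (eT η (x, t) * eT (eT η) (x, t)) - δ * (eT η (x, t) * eX (eX (eT η)) (x, t))
        + β * (eT η (x, t) * eX (eX (eX (eX η))) (x, t)) := by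
    simp only [plateOperator]; ring
  simp only [hexpand]
  rw [intervalIntegral.integral_add (Continuous.intervalIntegrable (by fun_prop) _ _)
      (Continuous.intervalIntegrable (by fun_prop) _ _),
    intervalIntegral.integral_sub (Continuous.intervalIntegrable (by fun_prop) _ _)
      (Continuous.intervalIntegrable (by fun_prop) _ _)]
  simp only [intervalIntegral.integral_const_mul, hdamping, hbending]
  ring

theorem hasDerivAt_plateEnergy (ϱ δ β : ℝ) (hη : ContDiff ℝ ∞ η)
    (hper : Function.Periodic η (1, 0)) (t : ℝ) :
    HasDerivAt (plateEnergy ϱ β η)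
      ((∫ x in (0 : ℝ)..1, eT η (x, t) * plateOperator ϱ δ β η (x, t))
        - δ * ∫ x in (0 : ℝ)..1, eT (eX η) (x, t) ^ 2) t := by
  have hcomm : eT (eX (eX η)) = eX (eX (eT η)) := by
    rw [eT_eX ((contDiff_eX hη).of_le ENat.LEInfty.out), eT_eX (hη.of_le ENat.LEInfty.out)]
  have hderiv := ((hasDerivAt_integral_sq ((contDiff_eT hη).of_le ENat.LEInfty.out) t).const_mul
    (ϱ / 2)).add ((hasDerivAt_integral_sq
      ((contDiff_eX (contDiff_eX hη)).of_le ENat.LEInfty.out) t).const_mul (β / 2))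
  refine hderiv.congr_deriv ?_
  rw [integral_eT_mul_plateOperator ϱ δ β hη hper, eT_eX (hη.of_le ENat.LEInfty.out), hcomm]
  ring

end Plate

/-- The energy of the coupled system at time `t`: the kinetic energy of the fluid plus the kinetic
and bending energy of the plate. -/
def totalEnergy (ϱ β : ℝ) (v1 v2 : ℝ × ℝ × ℝ → ℝ) (η : ℝ × ℝ → ℝ) (t : ℝ) : ℝ :=
  subgraphIntegral η (kineticDensity v1 v2) t + plateEnergy ϱ β η t

namespace IsClassicalFSISolution

variable {ϱ δ β T K t : ℝ} {f1 f2 v1 v2 pr : ℝ × ℝ × ℝ → ℝ} {η : ℝ × ℝ → ℝ} {η0 : ℝ → ℝ}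

variable (S : IsClassicalFSISolution ϱ δ β T f1 f2 v1 v2 pr η η0)

include S

theorem v1_periodic : Function.Periodic v1 (1, 0, 0) := fun ⟨x, z, t⟩ => by
  simpa using S.periodic_v1 x z t

theorem v2_periodic : Function.Periodic v2 (1, 0, 0) := fun ⟨x, z, t⟩ => by
  simpa using S.periodic_v2 x z t

theorem pr_periodic : Function.Periodic pr (1, 0, 0) := fun ⟨x, z, t⟩ => by
  simpa using S.periodic_pr x z t

theorem η_periodic : Function.Periodic η (1, 0) := fun ⟨x, t⟩ => by
  simpa using S.periodic_η x t

theorem energyFlux_periodic : Function.Periodic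
    (energyFlux v1 v2 (stressXX v1 pr) (stressXZ v1 v2) v1) (1, 0, 0) := fun q => by
  have h (f : ℝ × ℝ × ℝ → ℝ) (hf : Function.Periodic f (1, 0, 0)) (u : ℝ × ℝ × ℝ) :
      fderiv ℝ f (q + (1, 0, 0)) u = fderiv ℝ f q u := periodic_fderiv_apply hf u q
  simp only [energyFlux, stressXX, stressXZ, kineticDensity, dX, dZ, S.v1_periodic q,
    S.v2_periodic q, S.pr_periodic q, h v1 S.v1_periodic, h v2 S.v2_periodic]

theorem integral_eT_eq_zero (ht : t ∈ Ico 0 T) : ∫ x in (0 : ℝ)..1, eT η (x, t) = 0 := by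
  obtain rfl | ht0 := ht.1.eq_or_lt
  · simp only [S.init_ηt, intervalIntegral.integral_zero]
  have htI : t ∈ Icc 0 T := Ico_subset_Icc_self ht
  calc ∫ x in (0 : ℝ)..1, eT η (x, t) = subgraphIntegral η (fun q => dX v1 q + dZ v2 q) t := by
        rw [subgraphIntegral_divergence (S.smooth_η.of_le ENat.LEInfty.out)
          (S.smooth_v1.of_le ENat.LEInfty.out) (S.smooth_v2.of_le ENat.LEInfty.out) S.η_periodic
          S.v1_periodic]
        simp only [S.kinematic_1 _ t htI, S.kinematic_2 _ t htI, (S.noslip _ t htI).2, mul_zero,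
          sub_zero]
    _ = subgraphIntegral η (fun _ => 0) t :=
        subgraphIntegral_congr (fun x => (S.η_pos x t htI).le) fun x z hz =>
          S.incompressible x z t ⟨ht0, ht.2⟩ hz
    _ = 0 := by simp only [subgraphIntegral, intervalIntegral.integral_zero]

theorem integral_η_eq (ht : t ∈ Icc 0 T) :
    ∫ x in (0 : ℝ)..1, η (x, t) = ∫ x in (0 : ℝ)..1, η0 x := by
  have hη := S.smooth_η
  have hderiv (s : ℝ) : HasDerivAt (fun s => ∫ x in (0 : ℝ)..1, η (x, s))
      (∫ x in (0 : ℝ)..1, eT η (x, s)) s :=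
    hasDerivAt_integral_of_continuous (F := fun s x => η (x, s)) (F' := fun s x => eT η (x, s))
      (fun s => by fun_prop) (by simp only [Function.uncurry_def]; fun_prop)
      (fun s x => hasDerivAt_eT (hη.differentiable (by simp) _)) 0 1 s
  have hconst := constant_of_has_deriv_right_zero (a := 0) (b := t)
    (fun s _ => (hderiv s).continuousAt.continuousWithinAt)
    (fun s hs => ((hderiv s).congr_deriv
      (S.integral_eT_eq_zero ⟨hs.1, hs.2.trans_le ht.2⟩)).hasDerivWithinAt)
    t ⟨ht.1, le_rfl⟩
  simpa only [S.init_η] using hconst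

theorem energyFlux_boundary (ht : t ∈ Ioo 0 T) (x : ℝ) :
    energyFlux v1 v2 (stressXZ v1 v2) (stressZZ v2 pr) v2 (x, η (x, t), t)
        - eX η (x, t) * energyFlux v1 v2 (stressXX v1 pr) (stressXZ v1 v2) v1 (x, η (x, t), t)
        - energyFlux v1 v2 (stressXZ v1 v2) (stressZZ v2 pr) v2 (x, 0, t) =
      -(eT η (x, t) * plateOperator ϱ δ β η (x, t))
        - eT η (x, t) * kineticDensity v1 v2 (x, η (x, t), t) := by
  have htI : t ∈ Icc 0 T := Ioo_subset_Icc_self ht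
  rw [plateOperator, S.plate x t ht]
  simp only [energyFlux, stressXZ, stressZZ, S.kinematic_1 x t htI, S.kinematic_2 x t htI,
    S.noslip x t htI]
  ring

theorem hasDerivAt_kineticEnergy (ht : t ∈ Ioo 0 T) :
    HasDerivAt (subgraphIntegral η (kineticDensity v1 v2))
      (subgraphIntegral η
          (fun q => momentumX v1 v2 pr q * v1 q + momentumZ v1 v2 pr q * v2 q) t
        - 2 * subgraphIntegral η (strainSq v1 v2) t
        - ∫ x in (0 : ℝ)..1, eT η (x, t) * plateOperator ϱ δ β η (x, t)) t := by
  have h1 := S.smooth_v1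
  have h2 := S.smooth_v2
  have hp := S.smooth_pr
  have hη := S.smooth_η
  have hC1 {E : Type} [NormedAddCommGroup E] [NormedSpace ℝ E] {h : E → ℝ}
    (hh : ContDiff ℝ ∞ h) : ContDiff ℝ 1 h := hh.of_le ENat.LEInfty.out
  have hstrain := continuous_strainSq (hC1 h1) (hC1 h2)
  have hplate : Continuous (plateOperator ϱ δ β η) := by unfold plateOperator; fun_prop
  set P := energyFlux v1 v2 (stressXX v1 pr) (stressXZ v1 v2) v1 with hP_def
  set Q := energyFlux v1 v2 (stressXZ v1 v2) (stressZZ v2 pr) v2 with hQ_def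
  have hP : ContDiff ℝ ∞ P := by fun_prop
  have hQ : ContDiff ℝ ∞ Q := by fun_prop
  set W := fun q => momentumX v1 v2 pr q * v1 q + momentumZ v1 v2 pr q * v2 q
  have hinterior : subgraphIntegral η (dT (kineticDensity v1 v2)) t
        + 2 * subgraphIntegral η (strainSq v1 v2) t =
      subgraphIntegral η (fun q => dX P q + dZ Q q) t + subgraphIntegral η W t := by
    rw [← subgraphIntegral_const_mul, ← subgraphIntegral_add (by fun_prop) (by fun_prop)
      (by fun_prop), ← subgraphIntegral_add (by fun_prop) (by fun_prop) (by fun_prop)]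
    refine subgraphIntegral_congr (fun x => (S.η_pos x t (Ioo_subset_Icc_self ht)).le)
      fun x z hz => ?_
    rw [dT_kineticDensity_add_strainSq h1 h2 hp, S.incompressible x z t ht hz, mul_zero, add_zero]
  have hboundary : subgraphIntegral η (fun q => dX P q + dZ Q q) t =
      -(∫ x in (0 : ℝ)..1, eT η (x, t) * plateOperator ϱ δ β η (x, t))
        - ∫ x in (0 : ℝ)..1, eT η (x, t) * kineticDensity v1 v2 (x, η (x, t), t) := by
    rw [subgraphIntegral_divergence (hC1 hη) (hC1 hP) (hC1 hQ) S.η_periodic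
      S.energyFlux_periodic]
    simp only [hP_def, hQ_def, S.energyFlux_boundary ht]
    rw [intervalIntegral.integral_sub (Continuous.intervalIntegrable (by fun_prop) _ _)
      (Continuous.intervalIntegrable (by fun_prop) _ _), intervalIntegral.integral_neg]
  refine (hasDerivAt_subgraphIntegral (hC1 hη) (hC1 (contDiff_kineticDensity h1 h2))
    t).congr_deriv ?_
  linarith

theorem hasDerivAt_totalEnergy (ht : t ∈ Ioo 0 T) :
    HasDerivAt (totalEnergy ϱ β v1 v2 η)
      (subgraphIntegral η
          (fun q => momentumX v1 v2 pr q * v1 q + momentumZ v1 v2 pr q * v2 q) t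
        - 2 * subgraphIntegral η (strainSq v1 v2) t
        - δ * ∫ x in (0 : ℝ)..1, eT (eX η) (x, t) ^ 2) t :=
  ((S.hasDerivAt_kineticEnergy ht).add
    (hasDerivAt_plateEnergy ϱ δ β S.smooth_η S.η_periodic t)).congr_deriv (by ring)

theorem totalEnergy_zero :
    totalEnergy ϱ β v1 v2 η 0 = β / 2 * ∫ x in (0 : ℝ)..1, deriv (deriv η0) x ^ 2 := by
  have hderiv {h : ℝ × ℝ → ℝ} (hh : ContDiff ℝ ∞ h) :
      deriv (fun x => h (x, 0)) = fun x => eX h (x, 0) :=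
    funext fun x => (hasDerivAt_eX (hh.differentiable (by simp) (x, 0))).deriv
  have hη0 : η0 = fun x => η (x, 0) := funext fun x => (S.init_η x).symm
  simp only [totalEnergy, plateEnergy, subgraphIntegral, kineticDensity, S.init_v, S.init_ηt, hη0,
    hderiv S.smooth_η, hderiv (contDiff_eX S.smooth_η)]
  simp

theorem momentum_sq_le (ht : t ∈ Ioo 0 T) {x z : ℝ} (hz : z ∈ Ioo 0 (η (x, t)))
    (hf : f1 (x, z, t) ^ 2 + f2 (x, z, t) ^ 2 ≤ K ^ 2) :
    momentumX v1 v2 pr (x, z, t) ^ 2 + momentumZ v1 v2 pr (x, z, t) ^ 2 ≤ K ^ 2 := by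
  rwa [show momentumX v1 v2 pr (x, z, t) = f1 (x, z, t) from S.momentum_1 x z t ht hz,
    show momentumZ v1 v2 pr (x, z, t) = f2 (x, z, t) from S.momentum_2 x z t ht hz]

theorem sq_le_iSup_sq (t : ℝ) {x : ℝ} (hx : x ∈ Icc (0 : ℝ) 1) :
    η (x, t) ^ 2 ≤ ⨆ y : Icc (0 : ℝ) 1, η (y.1, t) ^ 2 := by
  have hη := S.smooth_η
  have hbdd := (isCompact_Icc (a := (0 : ℝ)) (b := 1)).bddAbove_image
    (by fun_prop : Continuous fun y => η (y, t) ^ 2).continuousOn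
  exact le_ciSup (f := fun y : Icc (0 : ℝ) 1 => η (y.1, t) ^ 2)
    (by rwa [image_eq_range] at hbdd) ⟨x, hx⟩

theorem power_le (ht : t ∈ Ioo 0 T)
    (hf : ∀ x, ∀ z ∈ Ioo 0 (η (x, t)), f1 (x, z, t) ^ 2 + f2 (x, z, t) ^ 2 ≤ K ^ 2) :
    subgraphIntegral η (fun q => momentumX v1 v2 pr q * v1 q + momentumZ v1 v2 pr q * v2 q) t ≤
      1 / 4 * K ^ 2 * (∫ x in (0 : ℝ)..1, η0 x) * (⨆ x : Icc (0 : ℝ) 1, η (x.1, t) ^ 2)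
        + subgraphIntegral η (strainSq v1 v2) t := by
  have h1 := S.smooth_v1
  have h2 := S.smooth_v2
  have hp := S.smooth_pr
  have hη := S.smooth_η
  have htI : t ∈ Icc 0 T := Ioo_subset_Icc_self ht
  have hpos (x : ℝ) : 0 ≤ η (x, t) := (S.η_pos x t htI).le
  set A := ⨆ x : Icc (0 : ℝ) 1, η (x.1, t) ^ 2
  have hA : 0 < A := (pow_pos (S.η_pos 0 t htI) 2).trans_le (S.sq_le_iSup_sq t (by simp))
  have hyoung := subgraphIntegral_dot_le (by fun_prop : Continuous (momentumX v1 v2 pr))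
    (by fun_prop : Continuous (momentumZ v1 v2 pr)) h1.continuous h2.continuous hη.continuous hpos
    hA fun x z hz => S.momentum_sq_le ht hz (hf x z hz)
  have hpoincare := subgraphIntegral_kineticDensity_le (h1.of_le ENat.LEInfty.out)
    (h2.of_le ENat.LEInfty.out) hη.continuous hpos (fun x => S.sq_le_iSup_sq t)
    fun x => S.noslip x t htI
  have hkorn := subgraphIntegral_gradSq_le (h1.of_le ENat.LEInfty.out)
    (h2.of_le ENat.LEInfty.out) (hη.of_le ENat.LEInfty.out) S.v1_periodic S.v2_periodic
    S.η_periodic hpos (fun x => (S.noslip x t htI).1) fun x => S.kinematic_1 x t htI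
  rw [S.integral_η_eq htI] at hyoung
  have habsorb : 2 / A * subgraphIntegral η (kineticDensity v1 v2) t ≤
      subgraphIntegral η (strainSq v1 v2) t :=
    calc 2 / A * subgraphIntegral η (kineticDensity v1 v2) t
        ≤ 2 / A * (A / 4 * (2 * subgraphIntegral η (strainSq v1 v2) t)) := by
          gcongr
          exact hpoincare.trans (by gcongr)
      _ = subgraphIntegral η (strainSq v1 v2) t := by field_simp; ring
  linarith

theorem totalEnergy_le (ht : t ∈ Icc 0 T)
    (hf : ∀ s ∈ Ioo 0 t, ∀ x, ∀ z ∈ Ioo 0 (η (x, s)),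
      f1 (x, z, s) ^ 2 + f2 (x, z, s) ^ 2 ≤ K ^ 2) :
    totalEnergy ϱ β v1 v2 η t + (∫ s in (0 : ℝ)..t, subgraphIntegral η (strainSq v1 v2) s)
        + δ * (∫ s in (0 : ℝ)..t, ∫ x in (0 : ℝ)..1, eT (eX η) (x, s) ^ 2) ≤
      β / 2 * (∫ x in (0 : ℝ)..1, deriv (deriv η0) x ^ 2)
        + 1 / 4 * K ^ 2 * (∫ x in (0 : ℝ)..1, η0 x)
          * ∫ s in (0 : ℝ)..t, ⨆ x : Icc (0 : ℝ) 1, η (x.1, s) ^ 2 := by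
  have h1 := S.smooth_v1
  have h2 := S.smooth_v2
  have hη := S.smooth_η
  have hstrain := continuous_subgraphIntegral hη.continuous
    (continuous_strainSq (h1.of_le ENat.LEInfty.out) (h2.of_le ENat.LEInfty.out))
  have hsup : Continuous fun s => ⨆ x : Icc (0 : ℝ) 1, η (x.1, s) ^ 2 :=
    continuous_iSup_of_isCompact (f := fun s x => η (x, s) ^ 2) isCompact_Icc
      (by simp only [Function.uncurry_def]; fun_prop)
  have henergy : Continuous (totalEnergy ϱ β v1 v2 η) :=
    (continuous_subgraphIntegral hη.continuous (contDiff_kineticDensity h1 h2).continuous).add <|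
      continuous_iff_continuousAt.2 fun s =>
        (hasDerivAt_plateEnergy ϱ δ β hη S.η_periodic s).continuousAt
  have hmajorant : Continuous fun s =>
      1 / 4 * K ^ 2 * (∫ x in (0 : ℝ)..1, η0 x) * (⨆ x : Icc (0 : ℝ) 1, η (x.1, s) ^ 2)
      - subgraphIntegral η (strainSq v1 v2) s
      - δ * ∫ x in (0 : ℝ)..1, eT (eX η) (x, s) ^ 2 := by fun_prop
  have hincrement := sub_le_integral_of_hasDeriv_right_of_le ht.1 henergy.continuousOn
    (fun s hs => (S.hasDerivAt_totalEnergy ⟨hs.1, hs.2.trans_le ht.2⟩).hasDerivWithinAt)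
    hmajorant.continuousOn.integrableOn_Icc fun s hs => by
      linarith [S.power_le ⟨hs.1, hs.2.trans_le ht.2⟩ (hf s hs)]
  rw [intervalIntegral.integral_sub (Continuous.intervalIntegrable (by fun_prop) _ _)
      (Continuous.intervalIntegrable (by fun_prop) _ _),
    intervalIntegral.integral_sub (Continuous.intervalIntegrable (by fun_prop) _ _)
      (Continuous.intervalIntegrable (by fun_prop) _ _), intervalIntegral.integral_const_mul,
    intervalIntegral.integral_const_mul, S.totalEnergy_zero] at hincrement
  linarith

end IsClassicalFSISolution

theorem stmt_7_general {ϱ δ β T K t : ℝ} {f1 f2 v1 v2 pr : ℝ × ℝ × ℝ → ℝ} {η : ℝ × ℝ → ℝ}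
    {η0 : ℝ → ℝ} (S : IsClassicalFSISolution ϱ δ β T f1 f2 v1 v2 pr η η0) (ht : t ∈ Icc 0 T)
    (hf : ∀ s ∈ Ioo 0 t, ∀ x, ∀ z ∈ Ioo 0 (η (x, s)),
      f1 (x, z, s) ^ 2 + f2 (x, z, s) ^ 2 ≤ K ^ 2) :
    1 / 2 * (∫ p in {p : ℝ × ℝ | p.1 ∈ Ioo (0 : ℝ) 1 ∧ p.2 ∈ Ioo 0 (η (p.1, t))},
        (v1 (p.1, p.2, t) ^ 2 + v2 (p.1, p.2, t) ^ 2))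
      + (∫ s in (0 : ℝ)..t,
          ∫ p in {p : ℝ × ℝ | p.1 ∈ Ioo (0 : ℝ) 1 ∧ p.2 ∈ Ioo 0 (η (p.1, s))},
            ((dX v1 (p.1, p.2, s)) ^ 2 + (dZ v2 (p.1, p.2, s)) ^ 2
              + 2 * (((dZ v1 (p.1, p.2, s) + dX v2 (p.1, p.2, s)) / 2) ^ 2)))
      + ϱ / 2 * (∫ x in (0 : ℝ)..1, (eT η (x, t)) ^ 2)
      + δ * (∫ s in (0 : ℝ)..t, ∫ x in (0 : ℝ)..1, (eT (eX η) (x, s)) ^ 2)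
      + β / 2 * (∫ x in (0 : ℝ)..1, (eX (eX η) (x, t)) ^ 2)
    ≤ β / 2 * (∫ x in (0 : ℝ)..1, (deriv (deriv η0) x) ^ 2)
      + 1 / 4 * K ^ 2 * (∫ x in (0 : ℝ)..1, η0 x)
          * ∫ s in (0 : ℝ)..t, (⨆ x : Icc (0 : ℝ) 1, (η (x.1, s)) ^ 2) := by
  have hkinetic : 1 / 2 * (∫ p in {p : ℝ × ℝ | p.1 ∈ Ioo (0 : ℝ) 1 ∧ p.2 ∈ Ioo 0 (η (p.1, t))},
      (v1 (p.1, p.2, t) ^ 2 + v2 (p.1, p.2, t) ^ 2)) =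
      subgraphIntegral η (kineticDensity v1 v2) t := by
    rw [← MeasureTheory.integral_const_mul]
    exact setIntegral_subgraph S.smooth_η.continuous (fun x => (S.η_pos x t ht).le)
      (contDiff_kineticDensity S.smooth_v1 S.smooth_v2).continuous
  have hstrain : ∫ s in (0 : ℝ)..t,
      ∫ p in {p : ℝ × ℝ | p.1 ∈ Ioo (0 : ℝ) 1 ∧ p.2 ∈ Ioo 0 (η (p.1, s))},
        ((dX v1 (p.1, p.2, s)) ^ 2 + (dZ v2 (p.1, p.2, s)) ^ 2
          + 2 * (((dZ v1 (p.1, p.2, s) + dX v2 (p.1, p.2, s)) / 2) ^ 2)) =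
      ∫ s in (0 : ℝ)..t, subgraphIntegral η (strainSq v1 v2) s := by
    refine integral_congr fun s hs => ?_
    rw [uIcc_of_le ht.1] at hs
    exact setIntegral_subgraph S.smooth_η.continuous
      (fun x => (S.η_pos x s ⟨hs.1, hs.2.trans ht.2⟩).le)
      (continuous_strainSq (S.smooth_v1.of_le ENat.LEInfty.out)
        (S.smooth_v2.of_le ENat.LEInfty.out))
  have henergy := S.totalEnergy_le ht hf
  rw [totalEnergy, plateEnergy] at henergy
  rw [hkinetic, hstrain]
  linarith

/-- closed energy inequality (2.8).
There is an absolute constant `C₀ > 0` such that for every classical solution of the FSI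
problem with bounded force (`|f| ≤ K`) and for every `t ∈ (0,T)`,
`(1/2)‖v(t)‖²_{L²(Ω_η(t))} + ∫₀ᵗ‖D(v)‖²_{L²(Ω_η(s))} + (ϱ/2)‖∂ₜη(t)‖²_{L²}
 + δ∫₀ᵗ‖∂ₜ∂ₓη‖²_{L²} + (β/2)‖∂ₓ²η(t)‖²_{L²}
 ≤ (β/2)‖∂ₓ²η₀‖²_{L²} + C₀·K²·vol(Ω_{η₀})·∫₀ᵗ‖η(s)‖²_{L^∞(0,1)} ds`. -/
theorem stmt_7 :
    ∃ C₀ > (0:ℝ), ∀ T ϱ δ β K : ℝ, 0 < T → 0 < ϱ → 0 < δ → 0 < β → 0 ≤ K →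
      ∀ (f1 f2 v1 v2 pr : ℝ × ℝ × ℝ → ℝ) (η : ℝ × ℝ → ℝ) (η0 : ℝ → ℝ),
        IsClassicalFSISolution ϱ δ β T f1 f2 v1 v2 pr η η0 →
        (∀ q : ℝ × ℝ × ℝ, f1 q ^ 2 + f2 q ^ 2 ≤ K ^ 2) →
        ∀ t ∈ Ioo (0:ℝ) T,
          1 / 2 * (∫ p in {p : ℝ × ℝ | p.1 ∈ Ioo (0:ℝ) 1 ∧ p.2 ∈ Ioo 0 (η (p.1, t))},
              (v1 (p.1, p.2, t) ^ 2 + v2 (p.1, p.2, t) ^ 2))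
          + (∫ s in (0:ℝ)..t,
              ∫ p in {p : ℝ × ℝ | p.1 ∈ Ioo (0:ℝ) 1 ∧ p.2 ∈ Ioo 0 (η (p.1, s))},
                ((dX v1 (p.1, p.2, s)) ^ 2 + (dZ v2 (p.1, p.2, s)) ^ 2
                  + 2 * (((dZ v1 (p.1, p.2, s) + dX v2 (p.1, p.2, s)) / 2) ^ 2)))
          + ϱ / 2 * (∫ x in (0:ℝ)..1, (eT η (x, t)) ^ 2)
          + δ * (∫ s in (0:ℝ)..t, ∫ x in (0:ℝ)..1, (eT (eX η) (x, s)) ^ 2)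
          + β / 2 * (∫ x in (0:ℝ)..1, (eX (eX η) (x, t)) ^ 2)
        ≤ β / 2 * (∫ x in (0:ℝ)..1, (deriv (deriv η0) x) ^ 2)
          + C₀ * K ^ 2 * (∫ x in (0:ℝ)..1, η0 x)
              * ∫ s in (0:ℝ)..t, (⨆ x : Icc (0:ℝ) 1, (η (x.1, s)) ^ 2) := by
  refine ⟨1 / 4, by norm_num, fun T ϱ δ β K _ _ _ _ _ f1 f2 v1 v2 pr η η0 S hf t ht => ?_⟩
  exact stmt_7_general S (Ioo_subset_Icc_self ht) fun s _ x z _ => hf (x, z, s)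

end
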